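/- Let q be an even prime power and for each n ≥ 1 let G_n = Sp_{2n}(q) be the isometry group of a nondegenerate alternating bilinear form on F_q^{2n}, and let η_n be a complex representation of G_n whose character satisfies χ^{η_n}(g) = q^{dim ker(g−1)} for all g (the linear Weil representation τ). Let K^r_𝟙 be the distribution on Irr(G_n) after r steps of the tensor product Markov chain associated to η_n started at the trivial representation, and π the Plancherel measure of G_n. Then for every ε > 0 there exists a positive integer c (depending only on ε) such that for all sufficiently large n and r = n − c, one has ‖K^r_𝟙 − π‖_TV ≥ 1 − ε. -/

import Mathlib

open CategoryTheory MonoidalCategory Finset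

noncomputable section

/-- The multiplicity of the irreducible representation `ρ` in a finite-dimensional
representation `W`: the dimension of the space of `G`-equivariant maps `ρ ⟶ W`
(by Schur's lemma this equals the multiplicity of `ρ` in a decomposition of `W`
into irreducibles). -/
def multIn {G : Type} [Monoid G] (ρ W : FDRep ℂ G) : ℕ :=
  Module.finrank ℂ (ρ ⟶ W)

/-- The transition matrix of the tensor product Markov chain on (an index set `ι` for)
the irreducible representations of `G` associated with a fixed representation `η`:
`K(λ,ρ) = m_ρ(λ⊗η)·d_ρ/(d_λ·d_η)`. -/
def tensorChain {G : Type} [Monoid G] {ι : Type} (rep : ι → FDRep ℂ G) (η : FDRep ℂ G) :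
    Matrix ι ι ℝ := fun l r =>
  (multIn (rep r) (MonoidalCategory.tensorObj (rep l) η) * Module.finrank ℂ (rep r) : ℝ) /
    (Module.finrank ℂ (rep l) * Module.finrank ℂ η)

/-- The Plancherel measure `π(ρ) = d_ρ²/|G|` on the irreducible representations of `G`. -/
def plancherel {G : Type} [Monoid G] [Fintype G] {ι : Type} (rep : ι → FDRep ℂ G) (i : ι) :
    ℝ :=
  (Module.finrank ℂ (rep i) : ℝ) ^ 2 / (Fintype.card G : ℝ)

/-- The total variation distance between two probability distributions on a finite set:
`‖P − Q‖_TV = (1/2)·Σ_x |P x − Q x|`. -/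
def tvDist {X : Type*} [Fintype X] (P Q : X → ℝ) : ℝ :=
  (1 / 2) * ∑ x, |P x - Q x|

/-- The subgroup of `GL_m(E)` consisting of the invertible matrices preserving the
form `B` on `E^m`. -/
def formIsometry {E : Type} [Field E] {m : ℕ} (B : (Fin m → E) → (Fin m → E) → E) :
    Subgroup (Matrix (Fin m) (Fin m) E)ˣ where
  carrier := {g | ∀ x y, B ((g : Matrix (Fin m) (Fin m) E).mulVec x)
    ((g : Matrix (Fin m) (Fin m) E).mulVec y) = B x y}
  one_mem' := by
    intro x y
    simp [Matrix.one_mulVec]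
  mul_mem' := by
    intro a b ha hb x y
    simp only [Units.val_mul, ← Matrix.mulVec_mulVec]
    rw [ha, hb]
  inv_mem' := by
    intro g hg x y
    have := hg ((g⁻¹ : (Matrix (Fin m) (Fin m) E)ˣ).val.mulVec x)
      ((g⁻¹ : (Matrix (Fin m) (Fin m) E)ˣ).val.mulVec y)
    rw [Matrix.mulVec_mulVec, Matrix.mulVec_mulVec, ← Units.val_mul, mul_inv_cancel,
      Units.val_one, Matrix.one_mulVec, Matrix.one_mulVec] at this
    exact this.symm

instance {E : Type} [Field E] [Fintype E] {m : ℕ}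
    (B : (Fin m → E) → (Fin m → E) → E) : Fintype ↥(formIsometry B) :=
  Fintype.ofFinite _

/-- The dimension of the fixed space `ker(g−1)` of `g ∈ GL_m(E)` acting on `E^m`. -/
def fixdim {E : Type} [Field E] {m : ℕ} (g : (Matrix (Fin m) (Fin m) E)ˣ) : ℕ :=
  Module.finrank E (LinearMap.ker (Matrix.toLin' ((g : Matrix (Fin m) (Fin m) E) - 1)))

section RepresentationTheory

variable {G : Type} [Group G]

/-- The character of a representation is the sum of the characters of two complementary
subrepresentations. -/
theorem character_eq_add_of_isCompl {V : Type} [AddCommGroup V] [Module ℂ V]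
    [FiniteDimensional ℂ V] (ρ : Representation ℂ G V) {σ τ : Subrepresentation ρ}
    (h : IsCompl σ τ) (g : G) :
    ρ.character g = σ.toRepresentation.character g + τ.toRepresentation.character g := by
  have hc : IsCompl σ.toSubmodule τ.toSubmodule := by
    constructor
    · rw [disjoint_iff, ← Subrepresentation.toSubmodule_inf, h.inf_eq_bot]
      rfl
    · rw [codisjoint_iff, ← Subrepresentation.toSubmodule_sup, h.sup_eq_top]
      rfl
  let N : Bool → Submodule ℂ V := fun b => cond b σ.toSubmodule τ.toSubmodule
  have hN : DirectSum.IsInternal N := by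
    rw [DirectSum.isInternal_submodule_iff_isCompl N (i := true) (j := false) (by simp)]
    · exact hc
    · ext b
      cases b <;> simp
  have hmaps : ∀ b, Set.MapsTo (ρ g) (N b) (N b) := by
    intro b x hx
    cases b
    · exact τ.apply_mem_toSubmodule g hx
    · exact σ.apply_mem_toSubmodule g hx
  have := LinearMap.trace_eq_sum_trace_restrict hN hmaps
  rw [Fintype.sum_bool] at this
  exact this

/-- An endomorphism commuting with a simple representation is a scalar. -/
theorem exists_eq_smul_id_of_commute (V : FDRep ℂ G) [Simple V] (X : V →ₗ[ℂ] V)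
    (h : ∀ g, X ∘ₗ V.ρ g = V.ρ g ∘ₗ X) : ∃ c : ℂ, X = c • LinearMap.id := by
  let f : V ⟶ V := FDRep.forget₂HomLinearEquiv V V (Rep.ofHom ⟨X, h⟩)
  obtain ⟨c, hc⟩ := endomorphism_simple_eq_smul_id ℂ f
  refine ⟨c, ?_⟩
  have := congrArg (fun φ : V ⟶ V => φ.hom.hom.hom) hc
  exact this.symm

/-- Characters of involutions are real. -/
theorem exists_character_eq_real (V : FDRep ℂ G) {t : G} (ht : t * t = 1) :
    ∃ a : ℝ, V.character t = a := by
  let P : V →ₗ[ℂ] V := (1 / 2 : ℂ) • (1 + V.ρ t)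
  have hsq : V.ρ t * V.ρ t = 1 := by rw [← map_mul, ht, map_one]
  have hP : IsIdempotentElem P := by
    change P * P = P
    simp only [P, smul_mul_smul_comm, add_mul, mul_add, hsq, one_mul, mul_one]
    rw [show (1 : V →ₗ[ℂ] V) + V.ρ t + (V.ρ t + 1) = (2 : ℂ) • (1 + V.ρ t) by
      rw [two_smul]; abel, smul_smul]
    norm_num
  have htr := (LinearMap.IsIdempotentElem.isProj_range P hP).trace
  have hX : V.character t = 2 * LinearMap.trace ℂ V P - Module.finrank ℂ V := by
    simp [P, FDRep.character, mul_add]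
  refine ⟨2 * Module.finrank ℂ (LinearMap.range P) - Module.finrank ℂ V, ?_⟩
  rw [hX, htr]
  push_cast
  ring

theorem tensorChain_pow_nonneg {ι : Type} [Fintype ι] [DecidableEq ι]
    (rep : ι → FDRep ℂ G) (η : FDRep ℂ G) (r : ℕ) (i j : ι) :
    0 ≤ (tensorChain rep η ^ r) i j := by
  induction r generalizing j with
  | zero =>
    rw [pow_zero, Matrix.one_apply]
    split_ifs <;> norm_num
  | succ r ih =>
    rw [pow_succ, Matrix.mul_apply]
    refine Finset.sum_nonneg fun k _ => mul_nonneg (ih k) ?_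
    unfold tensorChain
    positivity

variable [Fintype G]

/-- An irreducible representation is a simple object of `FDRep`. -/
theorem simple_of_isIrreducible {V : Type} [AddCommGroup V] [Module ℂ V]
    [FiniteDimensional ℂ V] (ρ : Representation ℂ G V) [ρ.IsIrreducible] :
    Simple (FDRep.of ρ) := by
  have : Invertible (Nat.card G : ℂ) := invertibleOfNonzero (NeZero.ne _)
  rw [FDRep.simple_iff_char_is_norm_one]
  have h := Representation.char_orthonormal ρ ρ
  rw [if_pos ⟨Representation.Equiv.refl ρ⟩, inv_mul_eq_one₀ (NeZero.ne _)] at h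
  exact h.symm

/-- Every character is a nonnegative integral combination of irreducible characters. -/
theorem exists_character_eq_sum {ι : Type} [Fintype ι] [DecidableEq ι]
    (rep : ι → FDRep ℂ G)
    (hall : ∀ V : FDRep ℂ G, Simple V → ∃ i, Nonempty (V ≅ rep i)) (d : ℕ) :
    ∀ (V : Type) [AddCommGroup V] [Module ℂ V] [FiniteDimensional ℂ V]
      (ρ : Representation ℂ G V), Module.finrank ℂ V = d →
      ∃ m : ι → ℕ, ∀ g, ρ.character g = ∑ i, m i * (rep i).character g := by
  induction d using Nat.strong_induction_on with
  | _ d ih =>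
    intro V _ _ _ ρ hd
    by_cases hirr : ρ.IsIrreducible
    · obtain ⟨i, ⟨e⟩⟩ := hall _ (simple_of_isIrreducible ρ)
      refine ⟨Pi.single i 1, fun g => ?_⟩
      have : ρ.character g = (rep i).character g := congrFun (FDRep.char_iso e) g
      rw [this, Finset.sum_eq_single i] <;> simp +contextual
    · rcases subsingleton_or_nontrivial V with hV | hV
      · refine ⟨0, fun g => ?_⟩
        have : ρ g = 0 := Subsingleton.elim _ _
        simp [Representation.character, this]
      · have hne : (⊥ : Subrepresentation ρ) ≠ ⊤ := by
          intro h
          have h' : (⊥ : Submodule ℂ V) = ⊤ := congrArg Subrepresentation.toSubmodule h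
          exact bot_ne_top h'
        have : Nontrivial (Subrepresentation ρ) := ⟨⟨_, _, hne⟩⟩
        obtain ⟨σ, hσ⟩ : ∃ σ : Subrepresentation ρ, ¬ (σ = ⊥ ∨ σ = ⊤) := by
          by_contra! hcon
          exact hirr ⟨hcon⟩
        push Not at hσ
        have hs : Representation.IsSemisimpleRepresentation ρ := inferInstance
        obtain ⟨τ, hτ⟩ := hs.exists_isCompl σ
        have hlt : ∀ θ : Subrepresentation ρ, θ ≠ ⊤ →
            Module.finrank ℂ θ.toSubmodule < d := by
          intro θ hθ
          rw [← hd]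
          apply Submodule.finrank_lt
          intro h
          exact hθ (Subrepresentation.toSubmodule_injective h)
        have hτtop : τ ≠ ⊤ := by
          rintro rfl
          exact hσ.1 (by simpa using hτ.inf_eq_bot)
        obtain ⟨m₁, h₁⟩ := ih _ (hlt σ hσ.2) _ σ.toRepresentation rfl
        obtain ⟨m₂, h₂⟩ := ih _ (hlt τ hτtop) _ τ.toRepresentation rfl
        refine ⟨m₁ + m₂, fun g => ?_⟩
        rw [character_eq_add_of_isCompl ρ hτ, h₁, h₂, ← Finset.sum_add_distrib]
        simp [add_mul]

/-- The multiplicity as a scalar product of characters. -/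
theorem multIn_eq_sum (ρ W : FDRep ℂ G) :
    (multIn ρ W : ℂ) =
      (Nat.card G : ℂ)⁻¹ * ∑ g : G, W.character g * ρ.character g⁻¹ := by
  have : Invertible (Nat.card G : ℂ) := invertibleOfNonzero (NeZero.ne _)
  exact (FDRep.scalar_product_char_eq_finrank_equivariant ρ W).symm

/-- Decomposition of a character into irreducible characters. -/
theorem character_eq_sum_multIn {ι : Type} [Fintype ι] [DecidableEq ι]
    (rep : ι → FDRep ℂ G) (hsimple : ∀ i, Simple (rep i))
    (hall : ∀ V : FDRep ℂ G, Simple V → ∃ i, Nonempty (V ≅ rep i))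
    (hinj : ∀ i j : ι, Nonempty (rep i ≅ rep j) → i = j) (W : FDRep ℂ G) (g : G) :
    W.character g = ∑ i, multIn (rep i) W * (rep i).character g := by
  classical
  have : Invertible (Nat.card G : ℂ) := invertibleOfNonzero (NeZero.ne _)
  obtain ⟨m, hm⟩ := exists_character_eq_sum rep hall _ W W.ρ rfl
  replace hm : ∀ g, W.character g = ∑ i, m i * (rep i).character g := hm
  have hmult : ∀ j, (multIn (rep j) W : ℂ) = m j := by
    intro j
    have horth : ∀ i, (Nat.card G : ℂ)⁻¹ *
        ∑ g : G, (rep i).character g * (rep j).character g⁻¹ = if i = j then 1 else 0 := by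
      intro i
      rw [FDRep.char_orthonormal]
      refine if_congr ⟨hinj i j, ?_⟩ rfl rfl
      rintro rfl
      exact ⟨Iso.refl _⟩
    calc (multIn (rep j) W : ℂ)
        = ∑ i, m i * ((Nat.card G : ℂ)⁻¹ *
          ∑ g : G, (rep i).character g * (rep j).character g⁻¹) := by
          rw [multIn_eq_sum]
          simp_rw [hm, Finset.sum_mul, Finset.mul_sum]
          rw [Finset.sum_comm]
          refine Finset.sum_congr rfl fun i _ => Finset.sum_congr rfl fun g _ => ?_
          ring
      _ = m j := by simp only [horth, mul_ite, mul_one, mul_zero, Finset.sum_ite_eq',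
          Finset.mem_univ, if_true]
  rw [hm]
  exact Finset.sum_congr rfl fun i _ => by rw [hmult]

/-- The character of the regular representation. -/
theorem character_rightRegular [DecidableEq G] (g : G) :
    (TannakaDuality.FiniteGroup.rightRegular : Representation ℂ G (G → ℂ)).character g =
      if g = 1 then (Nat.card G : ℂ) else 0 := by
  rw [Representation.character, LinearMap.trace_eq_matrix_trace ℂ (Pi.basisFun ℂ G),
    Matrix.trace]
  simp only [Matrix.diag_apply, LinearMap.toMatrix_apply, Pi.basisFun_apply, Pi.basisFun_repr,
    TannakaDuality.FiniteGroup.rightRegular_apply, Pi.single_apply, mul_eq_left]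
  split_ifs <;> simp

/-- The column orthogonality relation `∑ d_i χ_i(g) = |G| δ_{g,1}`. -/
theorem sum_finrank_mul_character [DecidableEq G] {ι : Type} [Fintype ι] [DecidableEq ι]
    (rep : ι → FDRep ℂ G) (hsimple : ∀ i, Simple (rep i))
    (hall : ∀ V : FDRep ℂ G, Simple V → ∃ i, Nonempty (V ≅ rep i))
    (hinj : ∀ i j : ι, Nonempty (rep i ≅ rep j) → i = j) (g : G) :
    ∑ i, (Module.finrank ℂ (rep i) : ℂ) * (rep i).character g =
      if g = 1 then (Nat.card G : ℂ) else 0 := by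
  let R : FDRep ℂ G :=
    FDRep.of (TannakaDuality.FiniteGroup.rightRegular : Representation ℂ G (G → ℂ))
  have hR : ∀ g, R.character g = if g = 1 then (Nat.card G : ℂ) else 0 :=
    character_rightRegular
  rw [← hR, character_eq_sum_multIn rep hsimple hall hinj R g]
  refine Finset.sum_congr rfl fun i _ => ?_
  congr 1
  rw [multIn_eq_sum]
  simp [hR]

theorem finrank_pos_of_simple (V : FDRep ℂ G) [hV : Simple V] : 0 < Module.finrank ℂ V := by
  by_contra! h
  have : Invertible (Nat.card G : ℂ) := invertibleOfNonzero (NeZero.ne _)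
  have h0 : Module.finrank ℂ V = 0 := by omega
  have hs : Subsingleton V := Module.finrank_zero_iff.mp h0
  have hc : ∀ g, V.character g = 0 := by
    intro g
    have : V.ρ g = 0 := Subsingleton.elim _ _
    simp [FDRep.character, this]
  have := (FDRep.simple_iff_char_is_norm_one V).mp hV
  simp [hc] at this
  exact NeZero.ne (Nat.card G : ℂ) (by simp [← this])

/-- For a conjugation-invariant family of involutions, the central characters of the sum
are real and multiplicative. -/
theorem exists_real_central_character {κ : Type*} [Fintype κ] (T : κ → G)
    (hinv : ∀ v, T v * T v = 1)
    (hconj : ∀ g, ∃ σ : Equiv.Perm κ, ∀ v, g * T v * g⁻¹ = T (σ v))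
    (V : FDRep ℂ G) [Simple V] :
    ∃ a : ℝ, (a : ℂ) = ∑ v, V.character (T v) / Module.finrank ℂ V ∧
      (a : ℂ) ^ 2 = ∑ v, ∑ w, V.character (T v * T w) / Module.finrank ℂ V := by
  have hd : (Module.finrank ℂ V : ℂ) ≠ 0 :=
    Nat.cast_ne_zero.mpr (finrank_pos_of_simple V).ne'
  let X : V →ₗ[ℂ] V := ∑ v, V.ρ (T v)
  have hcomm : ∀ g, X ∘ₗ V.ρ g = V.ρ g ∘ₗ X := by
    intro g
    obtain ⟨σ, hσ⟩ := hconj g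
    change X * V.ρ g = V.ρ g * X
    simp only [X, Finset.sum_mul, Finset.mul_sum, ← map_mul]
    rw [← Equiv.sum_comp σ]
    refine Finset.sum_congr rfl fun v _ => ?_
    rw [← hσ, inv_mul_cancel_right]
  obtain ⟨c, hc⟩ := exists_eq_smul_id_of_commute V X hcomm
  choose b hb using fun v => exists_character_eq_real V (hinv v)
  have h1 : c = ∑ v, V.character (T v) / Module.finrank ℂ V := by
    have h := congrArg (LinearMap.trace ℂ V) hc
    simp only [X, map_sum, map_smul, LinearMap.trace_id, smul_eq_mul] at h
    rw [← Finset.sum_div, eq_div_iff hd, ← h]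
    rfl
  have h2 : c ^ 2 = ∑ v, ∑ w, V.character (T v * T w) / Module.finrank ℂ V := by
    have hXX : X * X = (c ^ 2) • (LinearMap.id : V →ₗ[ℂ] V) := by
      rw [hc]
      ext x
      simp [smul_smul, sq]
    have h := congrArg (LinearMap.trace ℂ V) hXX
    simp only [X, Finset.sum_mul, Finset.mul_sum, ← map_mul] at h
    simp only [map_sum, map_smul, LinearMap.trace_id, smul_eq_mul] at h
    simp only [← Finset.sum_div]
    rw [eq_div_iff hd, ← h]
    exact Finset.sum_comm
  have hreal : c = ((∑ v, b v / Module.finrank ℂ V : ℝ) : ℂ) := by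
    rw [h1]
    push_cast
    exact Finset.sum_congr rfl fun v _ => by rw [hb]
  exact ⟨_, hreal ▸ h1, hreal ▸ h2⟩

/-- The expectation of a normalized character under the tensor product chain. -/
theorem sum_tensorChain_pow_mul_character {ι : Type} [Fintype ι] [DecidableEq ι]
    (rep : ι → FDRep ℂ G) (hsimple : ∀ i, Simple (rep i))
    (hall : ∀ V : FDRep ℂ G, Simple V → ∃ i, Nonempty (V ≅ rep i))
    (hinj : ∀ i j : ι, Nonempty (rep i ≅ rep j) → i = j)
    (η : FDRep ℂ G) (g : G) (r : ℕ) (l : ι) :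
    ∑ i, (((tensorChain rep η ^ r) l i : ℝ) : ℂ) *
        ((rep i).character g / Module.finrank ℂ (rep i)) =
      (rep l).character g / Module.finrank ℂ (rep l) *
        (η.character g / Module.finrank ℂ η) ^ r := by
  have hd : ∀ i, (Module.finrank ℂ (rep i) : ℂ) ≠ 0 := fun i =>
    have := hsimple i
    Nat.cast_ne_zero.mpr (finrank_pos_of_simple (rep i)).ne'
  have hstep : ∀ j, ∑ i, ((tensorChain rep η j i : ℝ) : ℂ) *
      ((rep i).character g / Module.finrank ℂ (rep i)) =
      (rep j).character g / Module.finrank ℂ (rep j) *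
        (η.character g / Module.finrank ℂ η) := by
    intro j
    have h := character_eq_sum_multIn rep hsimple hall hinj (rep j ⊗ η) g
    rw [FDRep.char_tensor, Pi.mul_apply] at h
    rw [div_mul_div_comm, h, Finset.sum_div]
    refine Finset.sum_congr rfl fun i _ => ?_
    simp only [tensorChain]
    push_cast
    have := hd i
    field_simp
  induction r with
  | zero =>
    rw [pow_zero, pow_zero, mul_one, Finset.sum_eq_single l]
    · simp
    · intro i _ hi
      simp [Matrix.one_apply_ne hi.symm]
    · simp
  | succ r ih =>
    simp only [pow_succ, Matrix.mul_apply, Complex.ofReal_sum, Complex.ofReal_mul,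
      Finset.sum_mul]
    rw [Finset.sum_comm]
    simp only [mul_assoc, ← Finset.mul_sum, hstep]
    simp only [← mul_assoc, ← Finset.sum_mul, ih]

/-- The expectation of a normalized character under the Plancherel measure. -/
theorem sum_plancherel_mul_character [DecidableEq G] {ι : Type} [Fintype ι] [DecidableEq ι]
    (rep : ι → FDRep ℂ G) (hsimple : ∀ i, Simple (rep i))
    (hall : ∀ V : FDRep ℂ G, Simple V → ∃ i, Nonempty (V ≅ rep i))
    (hinj : ∀ i j : ι, Nonempty (rep i ≅ rep j) → i = j) (g : G) :
    ∑ i, ((plancherel rep i : ℝ) : ℂ) *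
      ((rep i).character g / Module.finrank ℂ (rep i)) = if g = 1 then 1 else 0 := by
  have hd : ∀ i, (Module.finrank ℂ (rep i) : ℂ) ≠ 0 := fun i =>
    have := hsimple i
    Nat.cast_ne_zero.mpr (finrank_pos_of_simple (rep i)).ne'
  have hG : (Nat.card G : ℂ) ≠ 0 := NeZero.ne _
  have h := sum_finrank_mul_character rep hsimple hall hinj g
  calc _ = ∑ i, (Module.finrank ℂ (rep i) : ℂ) * (rep i).character g / Nat.card G := by
        refine Finset.sum_congr rfl fun i _ => ?_
        have := hd i
        simp only [plancherel, Nat.card_eq_fintype_card]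
        push_cast
        field_simp
    _ = _ := by
        rw [← Finset.sum_div, h]
        split_ifs <;> simp

end RepresentationTheory
/-- A second moment lower bound for the total variation distance: if `f` has mean `m` and
variance at most `a` under `P`, and second moment at most `b` under `Q`, then `P` and `Q`
are far apart as soon as `m ^ 2` is much larger than `a + b`. -/
theorem one_sub_le_tvDist {X : Type*} [Fintype X] {P Q f : X → ℝ} {m a b : ℝ}
    (hP : ∀ x, 0 ≤ P x) (hQ : ∀ x, 0 ≤ Q x) (hP1 : ∑ x, P x = 1) (hQ1 : ∑ x, Q x = 1)
    (hm : 0 < m) (hPf : ∑ x, P x * f x = m) (hPf2 : ∑ x, P x * f x ^ 2 ≤ m ^ 2 + a)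
    (hQf2 : ∑ x, Q x * f x ^ 2 ≤ b) :
    1 - 4 * (a + b) / m ^ 2 ≤ tvDist P Q := by
  have hpt : ∀ x, P x + Q x -
      2 * (4 / m ^ 2 * (P x * f x ^ 2 - 2 * m * (P x * f x) + m ^ 2 * P x + Q x * f x ^ 2)) ≤
      |P x - Q x| := by
    intro x
    have hm2 : 0 < m ^ 2 := by positivity
    have h1 : 0 ≤ 4 / m ^ 2 * (P x * (f x - m) ^ 2) :=
      mul_nonneg (by positivity) (mul_nonneg (hP x) (sq_nonneg _))
    have h2 : 0 ≤ 4 / m ^ 2 * (Q x * f x ^ 2) :=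
      mul_nonneg (by positivity) (mul_nonneg (hQ x) (sq_nonneg _))
    have hexp : 4 / m ^ 2 *
        (P x * f x ^ 2 - 2 * m * (P x * f x) + m ^ 2 * P x + Q x * f x ^ 2) =
        4 / m ^ 2 * (P x * (f x - m) ^ 2) + 4 / m ^ 2 * (Q x * f x ^ 2) := by ring
    rw [hexp]
    rcases lt_or_ge (f x) (m / 2) with hf | hf
    · have : P x ≤ 4 / m ^ 2 * (P x * (f x - m) ^ 2) := by
        rw [div_mul_eq_mul_div, le_div_iff₀ hm2]
        nlinarith [mul_nonneg (hP x) (show 0 ≤ 4 * (f x - m) ^ 2 - m ^ 2 by nlinarith)]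
      linarith [neg_abs_le (P x - Q x)]
    · have : Q x ≤ 4 / m ^ 2 * (Q x * f x ^ 2) := by
        rw [div_mul_eq_mul_div, le_div_iff₀ hm2]
        nlinarith [mul_nonneg (hQ x) (show 0 ≤ 4 * f x ^ 2 - m ^ 2 by nlinarith)]
      linarith [le_abs_self (P x - Q x)]
  have hsum := Finset.sum_le_sum fun x (_ : x ∈ Finset.univ) => hpt x
  simp only [Finset.sum_sub_distrib, Finset.sum_add_distrib, ← Finset.mul_sum, hP1, hQ1,
    hPf] at hsum
  have hbound : 4 / m ^ 2 * (∑ x, P x * f x ^ 2 - 2 * m * m + m ^ 2 * 1 +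
      ∑ x, Q x * f x ^ 2) ≤ 4 / m ^ 2 * (a + b) := by
    gcongr
    nlinarith
  have heq : 4 / m ^ 2 * (a + b) = 4 * (a + b) / m ^ 2 := by ring
  unfold tvDist
  linarith

section SymplecticTransvections

variable {F : Type} [Field F] {m : ℕ}

/-- The linear form `x ↦ B x v` of a bilinear form. -/
def formRight (B : LinearMap.BilinForm F (Fin m → F)) (v : Fin m → F) :
    Module.Dual F (Fin m → F) :=
  B.flip v

@[simp]
theorem formRight_apply (B : LinearMap.BilinForm F (Fin m → F)) (v x : Fin m → F) :
    formRight B v x = B x v := rfl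

/-- The transvection `x ↦ x + B(x, v) v`. -/
def transv (B : LinearMap.BilinForm F (Fin m → F)) (v : Fin m → F) :
    (Fin m → F) →ₗ[F] (Fin m → F) :=
  LinearMap.id + (formRight B v).smulRight v

@[simp]
theorem transv_apply (B : LinearMap.BilinForm F (Fin m → F)) (v x : Fin m → F) :
    transv B v x = x + B x v • v := rfl

theorem formIsometry_ext {C : (Fin m → F) → (Fin m → F) → F} {g h : formIsometry C}
    (H : ∀ x, (g.1 : Matrix (Fin m) (Fin m) F).mulVec x =
      (h.1 : Matrix (Fin m) (Fin m) F).mulVec x) : g = h :=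
  Subtype.ext (Units.ext (Matrix.ext_of_mulVec_single fun _ => H _))

theorem mem_ker_fixed_iff (g : (Matrix (Fin m) (Fin m) F)ˣ) (x : Fin m → F) :
    x ∈ LinearMap.ker (Matrix.toLin' ((g : Matrix (Fin m) (Fin m) F) - 1)) ↔
      (g : Matrix (Fin m) (Fin m) F).mulVec x = x := by
  rw [LinearMap.mem_ker, Matrix.toLin'_apply, Matrix.sub_mulVec, Matrix.one_mulVec,
    sub_eq_zero]

theorem fixdim_le (g : (Matrix (Fin m) (Fin m) F)ˣ) : fixdim g ≤ m :=
  (Submodule.finrank_le _).trans_eq (Module.finrank_fin_fun F)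

theorem fixdim_one : fixdim (1 : (Matrix (Fin m) (Fin m) F)ˣ) = m := by
  rw [fixdim, Units.val_one, sub_self, map_zero, LinearMap.ker_zero, finrank_top,
    Module.finrank_fin_fun]

theorem linearIndependent_pair_of_forall_ne {v w : Fin m → F} (hv : v ≠ 0)
    (h : ∀ t : F, w ≠ t • v) : LinearIndependent F ![v, w] :=
  (LinearIndependent.pair_iff' hv).mpr fun t => (h t).symm

variable [CharP F 2] {B : LinearMap.BilinForm F (Fin m → F)}

theorem transv_transv (hB : B.IsAlt) (v x : Fin m → F) :
    transv B v (transv B v x) = x := by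
  have h2 : ∀ y : Fin m → F, y + y = 0 := fun y => by
    ext i
    exact CharTwo.add_self_eq_zero _
  simp [hB.self_eq_zero v, add_assoc, h2]

theorem toMatrix'_transv_mul_self (hB : B.IsAlt) (v : Fin m → F) :
    LinearMap.toMatrix' (transv B v) * LinearMap.toMatrix' (transv B v) = 1 := by
  rw [← LinearMap.toMatrix'_comp, ← LinearMap.toMatrix'_id]
  congr 1
  exact LinearMap.ext (transv_transv hB v)

theorem form_comm (hB : B.IsAlt) (x y : Fin m → F) : B x y = B y x := by
  rw [← hB.neg_eq, CharTwo.neg_eq]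

/-- The transvection `x ↦ x + B(x, v) v` as an isometry. -/
def transvection (hB : B.IsAlt) (v : Fin m → F) :
    formIsometry (fun x y => B x y) where
  val := ⟨LinearMap.toMatrix' (transv B v), LinearMap.toMatrix' (transv B v),
    toMatrix'_transv_mul_self hB v, toMatrix'_transv_mul_self hB v⟩
  property := by
    intro x y
    simp only [LinearMap.toMatrix'_mulVec, transv_apply, map_add, LinearMap.add_apply,
      map_smul, LinearMap.smul_apply, smul_eq_mul, hB.self_eq_zero v, mul_zero, add_zero]
    rw [form_comm hB v y, mul_comm (B y v), add_assoc, CharTwo.add_self_eq_zero, add_zero]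

theorem transvection_mulVec (hB : B.IsAlt) (v x : Fin m → F) :
    ((transvection hB v).1 : Matrix (Fin m) (Fin m) F).mulVec x = x + B x v • v := by
  simp [transvection, LinearMap.toMatrix'_mulVec]

theorem transvection_mul_self (hB : B.IsAlt) (v : Fin m → F) :
    transvection hB v * transvection hB v = 1 :=
  Subtype.ext (Units.ext (toMatrix'_transv_mul_self hB v))

theorem conj_transvection (hB : B.IsAlt) (g : formIsometry (fun x y => B x y))
    (v : Fin m → F) :
    g * transvection hB v * g⁻¹ =
      transvection hB ((g.1 : Matrix (Fin m) (Fin m) F).mulVec v) := by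
  rw [mul_inv_eq_iff_eq_mul]
  refine formIsometry_ext fun x => ?_
  have hg : B ((g.1 : Matrix (Fin m) (Fin m) F).mulVec x)
    ((g.1 : Matrix (Fin m) (Fin m) F).mulVec v) = B x v := g.2 x v
  simp only [Subgroup.coe_mul, Units.val_mul, ← Matrix.mulVec_mulVec, transvection_mulVec, hg,
    Matrix.mulVec_add, Matrix.mulVec_smul]

theorem exists_perm_conj_transvection (hB : B.IsAlt) (g : formIsometry (fun x y => B x y)) :
    ∃ σ : Equiv.Perm (Fin m → F), ∀ v,
      g * transvection hB v * g⁻¹ = transvection hB (σ v) :=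
  ⟨(Matrix.toLinearEquiv' (g.1 : Matrix (Fin m) (Fin m) F)
    (inferInstanceAs (Invertible (g.1 : Matrix (Fin m) (Fin m) F)))).toEquiv,
    fun v => conj_transvection hB g v⟩

theorem fixdim_transvection (hB : B.IsAlt) (v : Fin m → F) :
    m ≤ fixdim (transvection hB v).1 + 1 := by
  have h1 := (formRight B v).finrank_range_add_finrank_ker
  have h2 : Module.finrank F (LinearMap.range (formRight B v)) ≤ 1 :=
    (Submodule.finrank_le _).trans (by simp)
  have h3 : Module.finrank F (LinearMap.ker (formRight B v)) ≤
      fixdim (transvection hB v).1 := by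
    apply Submodule.finrank_mono
    intro x hx
    rw [mem_ker_fixed_iff, transvection_mulVec]
    rw [LinearMap.mem_ker, formRight_apply] at hx
    simp [hx]
  simp only [Module.finrank_fin_fun] at h1
  omega

theorem transvection_mul_mulVec_eq_iff (hB : B.IsAlt) (v w x : Fin m → F) :
    ((transvection hB v * transvection hB w).1 : Matrix (Fin m) (Fin m) F).mulVec x = x ↔
      B x v • v = B x w • w := by
  rw [Subgroup.coe_mul, Units.val_mul, ← Matrix.mulVec_mulVec]
  have hinv : ∀ y, ((transvection hB v).1 : Matrix (Fin m) (Fin m) F).mulVec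
      (((transvection hB v).1 : Matrix (Fin m) (Fin m) F).mulVec y) = y := fun y => by
    rw [Matrix.mulVec_mulVec]
    have := congrArg (fun g => (g.1 : Matrix (Fin m) (Fin m) F).mulVec y)
      (transvection_mul_self hB v)
    simpa using this
  constructor
  · intro h
    have h' := congrArg ((transvection hB v).1 : Matrix (Fin m) (Fin m) F).mulVec h
    rw [hinv, transvection_mulVec, transvection_mulVec] at h'
    exact (add_left_cancel h').symm
  · intro h
    rw [transvection_mulVec hB w, ← h, ← transvection_mulVec hB v, hinv]

theorem eq_of_forall_smul_eq (hB : B.IsAlt) (hnd : ∀ x, (∀ y, B x y = 0) → x = 0)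
    {v w : Fin m → F} (h : ∀ x, B x v • v = B x w • w) : v = w := by
  rw [← sub_eq_zero]
  refine hnd _ fun x => ?_
  have hx := congrArg (fun u => B u x) (h x)
  simp only [map_smul, LinearMap.smul_apply, smul_eq_mul] at hx
  rw [form_comm hB x v, form_comm hB x w] at hx
  have : (B v x - B w x) * (B v x - B w x) = 0 := by
    rw [CharTwo.sub_eq_add, CharTwo.add_mul_self, hx, CharTwo.add_self_eq_zero]
  rw [map_sub, LinearMap.sub_apply]
  exact mul_self_eq_zero.mp this

theorem eq_of_transvection_mul_eq_one (hB : B.IsAlt)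
    (hnd : ∀ x, (∀ y, B x y = 0) → x = 0) {v w : Fin m → F}
    (h : transvection hB v * transvection hB w = 1) : v = w := by
  refine eq_of_forall_smul_eq hB hnd fun x => ?_
  rw [← transvection_mul_mulVec_eq_iff hB, h]
  simp

theorem fixdim_transvection_mul_add_one_le (hB : B.IsAlt)
    (hnd : ∀ x, (∀ y, B x y = 0) → x = 0) {v w : Fin m → F} (hvw : v ≠ w) :
    fixdim (transvection hB v * transvection hB w).1 + 1 ≤ m := by
  rw [Nat.add_one_le_iff]
  conv_rhs => rw [← Module.finrank_fin_fun F (n := m)]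
  apply Submodule.finrank_lt
  intro htop
  refine hvw (eq_of_forall_smul_eq hB hnd fun x => ?_)
  rw [← transvection_mul_mulVec_eq_iff hB, ← mem_ker_fixed_iff, htop]
  trivial

theorem fixdim_transvection_mul_add_two_le (hB : B.IsAlt)
    (hnd : ∀ x, (∀ y, B x y = 0) → x = 0) {v w : Fin m → F}
    (hvw : LinearIndependent F ![v, w]) :
    fixdim (transvection hB v * transvection hB w).1 + 2 ≤ m := by
  rw [LinearIndependent.pair_iff] at hvw
  let φ : (Fin m → F) →ₗ[F] F × F := (formRight B v).prod (formRight B w)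
  have hsurj : LinearMap.range φ = ⊤ := by
    by_contra hne
    obtain ⟨f, hf, hle⟩ := Submodule.exists_le_ker_of_lt_top _ (lt_top_iff_ne_top.mpr hne)
    have hfe : ∀ a b, f (a, b) = a * f (1, 0) + b * f (0, 1) := by
      intro a b
      rw [← smul_eq_mul, ← smul_eq_mul, ← map_smul, ← map_smul, ← map_add]
      simp
    have hz : f (1, 0) • v + f (0, 1) • w = 0 := by
      refine hnd _ fun x => ?_
      have hx : f (B x v, B x w) = 0 := hle (LinearMap.mem_range_self φ x)
      rw [hfe] at hx
      rw [form_comm hB]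
      simp only [map_add, map_smul, smul_eq_mul]
      linear_combination hx
    obtain ⟨h1, h2⟩ := hvw _ _ hz
    apply hf
    ext <;> simp [h1, h2]
  have hrk := φ.finrank_range_add_finrank_ker
  rw [hsurj, finrank_top, Module.finrank_prod, Module.finrank_self,
    Module.finrank_fin_fun] at hrk
  have hle : fixdim (transvection hB v * transvection hB w).1 ≤
      Module.finrank F (LinearMap.ker φ) := by
    apply Submodule.finrank_mono
    intro x hx
    rw [mem_ker_fixed_iff, transvection_mul_mulVec_eq_iff] at hx
    obtain ⟨h1, h2⟩ := hvw (B x v) (- B x w) (by rw [hx, neg_smul, add_neg_cancel])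
    simp [φ, LinearMap.mem_ker, h1, neg_eq_zero.mp h2]
  omega

end SymplecticTransvections

section WeilChain

variable {F : Type} [Field F] [Fintype F]

/-- The number of linearly dependent ordered pairs of vectors is at most `(q + 1) q ^ m`. -/
theorem sum_dependent_pairs (m : ℕ) [DecidableEq F] :
    ∑ v : Fin m → F, ∑ w : Fin m → F,
      ((∑ t : F, if w = t • v then (1 : ℝ) else 0) + if v = 0 then 1 else 0) =
      (Fintype.card F : ℝ) ^ m * (Fintype.card F + 1) := by
  have h1 : ∀ v : Fin m → F, ∑ w : Fin m → F, ∑ t : F, (if w = t • v then (1 : ℝ) else 0) =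
      Fintype.card F := by
    intro v
    rw [Finset.sum_comm]
    simp
  simp only [Finset.sum_add_distrib, h1]
  simp
  ring

variable {m : ℕ}

/-- The normalized character `(q ^ fixdim g / q ^ m) ^ r` of the `r`-th tensor power of the
linear Weil representation. -/
def weilRatio (r : ℕ) (g : (Matrix (Fin m) (Fin m) F)ˣ) : ℝ :=
  ((Fintype.card F : ℝ) ^ fixdim g / (Fintype.card F : ℝ) ^ m) ^ r

theorem le_weilRatio (r k : ℕ) (g : (Matrix (Fin m) (Fin m) F)ˣ) (h : m ≤ fixdim g + k) :
    (1 / (Fintype.card F : ℝ) ^ r) ^ k ≤ weilRatio r g := by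
  have hq : (1 : ℝ) ≤ Fintype.card F := by exact_mod_cast Fintype.card_pos (α := F)
  have hq0 : (0 : ℝ) < Fintype.card F := by linarith
  rw [weilRatio, div_pow, one_pow, ← pow_mul, mul_comm r k, pow_mul, ← one_pow r, ← div_pow]
  refine pow_le_pow_left₀ (by positivity) ?_ r
  rw [div_le_div_iff₀ (by positivity) (by positivity), one_mul, ← pow_add]
  exact pow_le_pow_right₀ hq h

theorem weilRatio_le (r k : ℕ) (g : (Matrix (Fin m) (Fin m) F)ˣ) (h : fixdim g + k ≤ m) :
    weilRatio r g ≤ (1 / (Fintype.card F : ℝ) ^ r) ^ k := by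
  have hq : (1 : ℝ) ≤ Fintype.card F := by exact_mod_cast Fintype.card_pos (α := F)
  have hq0 : (0 : ℝ) < Fintype.card F := by linarith
  rw [weilRatio, div_pow 1, one_pow, ← pow_mul, mul_comm r k, pow_mul, ← one_pow r, ← div_pow]
  refine pow_le_pow_left₀ (by positivity) ?_ r
  rw [div_le_div_iff₀ (by positivity) (by positivity), one_mul, ← pow_add]
  exact pow_le_pow_right₀ hq h

variable [CharP F 2] {B : LinearMap.BilinForm F (Fin m → F)}

theorem le_sum_weilRatio_transvection (hB : B.IsAlt) (r : ℕ) :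
    (Fintype.card F : ℝ) ^ m * (1 / (Fintype.card F : ℝ) ^ r) ≤
      ∑ v, weilRatio r (transvection hB v).1 := by
  calc (Fintype.card F : ℝ) ^ m * (1 / (Fintype.card F : ℝ) ^ r)
      = ∑ _v : Fin m → F, (1 / (Fintype.card F : ℝ) ^ r) ^ 1 := by simp
    _ ≤ _ := Finset.sum_le_sum fun v _ => le_weilRatio r 1 _ (fixdim_transvection hB v)

theorem sum_weilRatio_transvection_mul_le (hB : B.IsAlt)
    (hnd : ∀ x, (∀ y, B x y = 0) → x = 0) (r : ℕ) :
    ∑ v, ∑ w, weilRatio r (transvection hB v * transvection hB w).1 ≤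
      (Fintype.card F : ℝ) ^ m +
        (Fintype.card F : ℝ) ^ m * (Fintype.card F + 1) * (1 / (Fintype.card F : ℝ) ^ r) +
        ((Fintype.card F : ℝ) ^ m * (1 / (Fintype.card F : ℝ) ^ r)) ^ 2 := by
  classical
  set u : ℝ := 1 / (Fintype.card F : ℝ) ^ r with hu
  have hu0 : 0 ≤ u := by positivity
  have hterm : ∀ v w, weilRatio r (transvection hB v * transvection hB w).1 ≤
      (if v = w then 1 else 0) +
        ((∑ t : F, if w = t • v then (1 : ℝ) else 0) + if v = 0 then 1 else 0) * u + u ^ 2 := by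
    intro v w
    have hs : 0 ≤ ∑ t : F, if w = t • v then (1 : ℝ) else 0 :=
      Finset.sum_nonneg fun t _ => by split_ifs <;> norm_num
    have hz : (0 : ℝ) ≤ if v = 0 then 1 else 0 := by split_ifs <;> norm_num
    by_cases hvw : v = w
    · have := weilRatio_le r 0 (transvection hB v * transvection hB w).1 (fixdim_le _)
      rw [pow_zero] at this
      rw [if_pos hvw]
      have := mul_nonneg (add_nonneg hs hz) hu0
      nlinarith
    rw [if_neg hvw, zero_add]
    by_cases hdep : v = 0 ∨ ∃ t : F, w = t • v
    · have h1 := weilRatio_le r 1 _ (fixdim_transvection_mul_add_one_le hB hnd hvw)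
      rw [pow_one, ← hu] at h1
      have hone : 1 ≤ (∑ t : F, if w = t • v then (1 : ℝ) else 0) + if v = 0 then 1 else 0 := by
        rcases hdep with h | ⟨t, ht⟩
        · rw [if_pos h]
          linarith
        · have := Finset.single_le_sum (f := fun t : F => if w = t • v then (1 : ℝ) else 0)
            (fun t _ => by split_ifs <;> norm_num) (Finset.mem_univ t)
          simp only [if_pos ht] at this
          linarith
      nlinarith [mul_le_mul_of_nonneg_right hone hu0]
    · push Not at hdep
      have h2 := weilRatio_le r 2 _ (fixdim_transvection_mul_add_two_le hB hnd
        (linearIndependent_pair_of_forall_ne hdep.1 hdep.2))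
      rw [← hu] at h2
      have := mul_nonneg (add_nonneg hs hz) hu0
      linarith
  refine (Finset.sum_le_sum fun v _ => Finset.sum_le_sum fun w _ => hterm v w).trans_eq ?_
  rw [← sum_dependent_pairs]
  simp only [Finset.sum_add_distrib, Finset.sum_mul, add_mul]
  simp
  ring

/-- The quantitative lower bound: after `r` steps the distance to the Plancherel measure is at
least `1 - 16 q ^ (2 r - m)`. -/
theorem one_sub_le_tvDist_tensorChain (hB : B.IsAlt)
    (hnd : ∀ x, (∀ y, B x y = 0) → x = 0) {ι : Type} [Fintype ι] [DecidableEq ι]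
    (rep : ι → FDRep ℂ (formIsometry fun x y => B x y)) (hsimple : ∀ i, Simple (rep i))
    (hall : ∀ V : FDRep ℂ (formIsometry fun x y => B x y),
      Simple V → ∃ i, Nonempty (V ≅ rep i))
    (hinj : ∀ i j : ι, Nonempty (rep i ≅ rep j) → i = j)
    (triv : ι) (htriv : ∀ g, (rep triv).character g = 1)
    (η : FDRep ℂ (formIsometry fun x y => B x y))
    (hη : ∀ g, η.character g = (Fintype.card F : ℂ) ^ fixdim g.1) {r : ℕ} (hr : 1 ≤ r) :
    1 - 16 * ((Fintype.card F : ℝ) ^ (2 * r) / (Fintype.card F : ℝ) ^ m) ≤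
      tvDist (fun i => (tensorChain rep η ^ r) triv i) (plancherel rep) := by
  classical
  have hq : (1 : ℝ) ≤ Fintype.card F := by exact_mod_cast Fintype.card_pos (α := F)
  have hq0 : (0 : ℝ) < Fintype.card F := by linarith
  have hd : ∀ i, (Module.finrank ℂ (rep i) : ℂ) ≠ 0 := fun i =>
    have := hsimple i
    Nat.cast_ne_zero.mpr (finrank_pos_of_simple (rep i)).ne'
  choose f hf hf2 using fun i => have := hsimple i
    exists_real_central_character (transvection hB) (transvection_mul_self hB)
      (exists_perm_conj_transvection hB) (rep i)
  have hmoments : ∀ (P : ι → ℝ) (φ : (formIsometry fun x y => B x y) → ℝ),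
      (∀ g, ∑ i, (P i : ℂ) * ((rep i).character g / Module.finrank ℂ (rep i)) = φ g) →
      ∑ i, P i = φ 1 ∧ ∑ i, P i * f i = ∑ v, φ (transvection hB v) ∧
        ∑ i, P i * f i ^ 2 = ∑ v, ∑ w, φ (transvection hB v * transvection hB w) := by
    intro P φ h
    refine ⟨?_, ?_, ?_⟩ <;> apply Complex.ofReal_injective <;> push_cast
    · rw [← h]
      exact Finset.sum_congr rfl fun i _ => by rw [FDRep.char_one, div_self (hd i), mul_one]
    · simp only [← h, hf, Finset.mul_sum]
      exact Finset.sum_comm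
    · simp only [← h, hf2, Finset.mul_sum]
      rw [Finset.sum_comm]
      exact Finset.sum_congr rfl fun v _ => Finset.sum_comm
  have hdη : (Module.finrank ℂ η : ℂ) = (Fintype.card F : ℂ) ^ m := by
    rw [← FDRep.char_one, hη, Subgroup.coe_one, fixdim_one]
  obtain ⟨hP1, hPf, hPf2⟩ := hmoments (fun i => (tensorChain rep η ^ r) triv i)
    (fun g => weilRatio r g.1) fun g => by
      rw [sum_tensorChain_pow_mul_character rep hsimple hall hinj, hη, hdη, htriv,
        ← FDRep.char_one, htriv, weilRatio]
      push_cast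
      simp
  obtain ⟨hQ1, -, hQf2⟩ := hmoments (plancherel rep) (fun g => if g = 1 then 1 else 0)
    fun g => by
      rw [sum_plancherel_mul_character rep hsimple hall hinj]
      split_ifs <;> simp
  have hweil_one : weilRatio r ((1 : formIsometry fun x y => B x y).1) = 1 := by
    rw [Subgroup.coe_one, weilRatio, fixdim_one, div_self (by positivity), one_pow]
  set N : ℝ := (Fintype.card F : ℝ) ^ m with hN
  set u : ℝ := 1 / (Fintype.card F : ℝ) ^ r with hu
  have hN0 : 0 < N := by positivity
  have hu0 : 0 < u := by positivity
  have hqu : Fintype.card F * u ≤ 1 := by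
    rw [hu, mul_one_div, div_le_one (by positivity)]
    exact le_self_pow₀ hq (by omega)
  have hmean := le_sum_weilRatio_transvection hB r
  have hsecond := sum_weilRatio_transvection_mul_le hB hnd r
  rw [← hN, ← hu] at hmean hsecond
  set M : ℝ := ∑ v, weilRatio r (transvection hB v).1
  have hNu : 0 < N * u := by positivity
  have hQle : ∑ i, plancherel rep i * f i ^ 2 ≤ N := by
    rw [hQf2]
    calc _ ≤ ∑ v : Fin m → F, ∑ w : Fin m → F, if v = w then (1 : ℝ) else 0 := by
          refine Finset.sum_le_sum fun v _ => Finset.sum_le_sum fun w _ => ?_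
          by_cases h : transvection hB v * transvection hB w = 1
          · rw [if_pos h, if_pos (eq_of_transvection_mul_eq_one hB hnd h)]
          · rw [if_neg h]
            split_ifs <;> norm_num
      _ = N := by simp [hN]
  have hsq : (N * u) ^ 2 ≤ M ^ 2 := by gcongr
  have hvar : ∑ i, (tensorChain rep η ^ r) triv i * f i ^ 2 ≤ M ^ 2 + 3 * N := by
    rw [hPf2]
    nlinarith
  have hTV := one_sub_le_tvDist (fun i => tensorChain_pow_nonneg rep η r triv i)
    (fun i => by unfold plancherel; positivity) (hP1.trans hweil_one) (by simpa using hQ1)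
    (hNu.trans_le hmean) hPf hvar hQle
  refine le_trans ?_ hTV
  have h16 : 4 * (3 * N + N) / M ^ 2 ≤ 16 * N / (N * u) ^ 2 := by
    rw [show 4 * (3 * N + N) = 16 * N by ring]
    gcongr
  have heq : 16 * N / (N * u) ^ 2 = 16 * ((Fintype.card F : ℝ) ^ (2 * r) / N) := by
    rw [hu, mul_comm 2 r, pow_mul]
    field_simp
  linarith

end WeilChain

/-- **Theorem (lower bound for `Sp_{2n}(q)`, `q` even).**  Let `q` be an even prime power
and, for each `n ≥ 1`, let `G_n = Sp_{2n}(q)` be the isometry group of a nondegenerate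
alternating bilinear form on `F_q^{2n}`, and let `η_n` be a complex representation of
`G_n` with character `χ^{η_n}(g) = q^{dim ker(g−1)}` (the linear Weil representation
`τ`).  Let `K^r_𝟙` be the distribution after `r` steps of the tensor product Markov chain
associated with `η_n` started at the trivial representation, and `π` the Plancherel
measure.  Then for every `ε > 0` there is a positive integer `c` (depending only on `ε`)
such that for all sufficiently large `n` and `r = n − c`, `‖K^r_𝟙 − π‖_TV ≥ 1 − ε`. -/
theorem sp_even_weil_lower_asymptotic {q : ℕ} (hq : IsPrimePow q) (hqeven : Even q) :
    ∀ ε : ℝ, 0 < ε → ∃ c : ℕ, 0 < c ∧ ∃ N : ℕ, ∀ n : ℕ, N ≤ n → 1 ≤ n →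
      ∀ (F : Type) [Field F] [Fintype F],
        Fintype.card F = q →
        ∀ B : (Fin (2 * n) → F) → (Fin (2 * n) → F) → F,
          (∀ x x' y, B (x + x') y = B x y + B x' y) →
          (∀ (a : F) (x y : Fin (2 * n) → F), B (a • x) y = a * B x y) →
          (∀ x y y', B x (y + y') = B x y + B x y') →
          (∀ (a : F) (x y : Fin (2 * n) → F), B x (a • y) = a * B x y) →
          (∀ x, B x x = 0) →
          (∀ x, (∀ y, B x y = 0) → x = 0) →
          ∀ (ι : Type) [Fintype ι] [DecidableEq ι],
            ∀ rep : ι → FDRep ℂ ↥(formIsometry B),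
              (∀ i, Simple (rep i)) →
              (∀ V : FDRep ℂ ↥(formIsometry B), Simple V → ∃ i, Nonempty (V ≅ rep i)) →
              (∀ i j : ι, Nonempty (rep i ≅ rep j) → i = j) →
              ∀ triv : ι, (∀ g : ↥(formIsometry B), (rep triv).character g = 1) →
                ∀ η : FDRep ℂ ↥(formIsometry B),
                  (∀ g : ↥(formIsometry B), η.character g =
                    (q : ℂ) ^ fixdim (g : (Matrix (Fin (2 * n)) (Fin (2 * n)) F)ˣ)) →
                  1 - ε ≤
                    tvDist (fun ρ => (tensorChain rep η ^ (n - c)) triv ρ)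
                      (plancherel rep) := by
  intro ε hε
  have hq2 : 2 ≤ q := hq.two_le
  obtain ⟨c, hc⟩ := exists_pow_lt_of_lt_one (show 0 < ε / 16 by positivity)
    (show (1 / 2 : ℝ) < 1 by norm_num)
  refine ⟨c + 1, c.succ_pos, c + 2, ?_⟩
  intro n hn _ F _ _ hcard B hadd hsmul hadd' hsmul' halt hnd ι _ _ rep hsimple hall hinj
    triv htriv η hη
  obtain ⟨B, rfl⟩ : ∃ C : LinearMap.BilinForm F (Fin (2 * n) → F), B = fun x y => C x y :=
    ⟨LinearMap.mk₂ F B hadd hsmul hadd' hsmul', rfl⟩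
  subst hcard
  have hchar : CharP F 2 :=
    ringChar.of_eq ((FiniteField.even_card_iff_char_two).mpr (Nat.even_iff.mp hqeven))
  refine le_trans ?_ (one_sub_le_tvDist_tensorChain halt hnd rep hsimple hall hinj triv htriv
    η hη (r := n - (c + 1)) (by omega))
  have hq2' : (2 : ℝ) ≤ Fintype.card F := by exact_mod_cast hq2
  have hpow : (Fintype.card F : ℝ) ^ (2 * (n - (c + 1))) / (Fintype.card F : ℝ) ^ (2 * n) ≤
      (1 / 2) ^ c := by
    rw [div_pow, one_pow, div_le_div_iff₀ (by positivity) (by positivity), one_mul]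
    calc (Fintype.card F : ℝ) ^ (2 * (n - (c + 1))) * 2 ^ c
        ≤ (Fintype.card F : ℝ) ^ (2 * (n - (c + 1))) * (Fintype.card F : ℝ) ^ c := by gcongr
      _ = (Fintype.card F : ℝ) ^ (2 * (n - (c + 1)) + c) := (pow_add _ _ _).symm
      _ ≤ (Fintype.card F : ℝ) ^ (2 * n) :=
          pow_le_pow_right₀ (by linarith) (by omega)
  linarith
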